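/- arXiv:1704.08481 — 2 statements merged into one kernel-verified Lean document; each statement's English description precedes it below -/
import Mathlib

section
/- Let φ be an outmap on the standard n-cube. Then φ is a USO of the full face [∅,{1,…,n}] if and only if for every face [A,B] of dimension at least 1 there exists a pair of vertices U, V ∈ [A,B] that are antipodal in [A,B] and satisfy (φ(U) ∆ φ(V)) ∩ (U ∆ V) ≠ ∅. (This establishes correctness of a USO-recognition procedure that performs one antipodal pair evaluation per face, i.e. O(3^n) pair evaluations.) -/
/-!
Flipping one coordinate `i` of the outmap preserves whether a face has a unique sink, as long as
both `i`-facets have one: a sink of the face is the sink of an `i`-facet, so the face has a unique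
sink iff exactly one of the two facet sinks has an outgoing `i`-edge, and the flip exchanges the
roles of these two facet sinks. Hence flips by arbitrary coordinate sets preserve USOs and PUSOs.

Flipping by `φ U` turns `U` into a sink of every face containing it. So if `φ` is a USO, vertices
`U ≠ V` have outmaps that differ on `U ∆ V`, as otherwise both would become sinks of the face
`[U ∩ V, U ∪ V]`. If `[A,B]` is a PUSO, it has a second sink `W` after the flip; `U` and `W` lie in
no common proper face, so `W` is the antipode of `U`, and `φ U`, `φ W` agree on the carrier. The
theorem follows because a face that is not a USO contains a PUSO.
-/

open Finset
open scoped symmDiff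

/-- `V` is a sink of the face `[A,B]` of the standard cube (vertices are subsets
of `{1,…,n}`) under the outmap `φ`: `V` belongs to the face and `φ V` has no
coordinate in the carrier `B \ A`. -/
def IsSink (φ : Finset ℕ → Finset ℕ) (A B V : Finset ℕ) : Prop :=
  A ⊆ V ∧ V ⊆ B ∧ φ V ∩ (B \ A) = ∅

/-- The face `[A,B]` has exactly one sink under `φ`. -/
def HasUniqueSink (φ : Finset ℕ → Finset ℕ) (A B : Finset ℕ) : Prop :=
  ∃! V, IsSink φ A B V

/-- `φ` is a USO of the face `[A,B]`: every face contained in `[A,B]`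
(including `[A,B]` itself) has exactly one sink under `φ`. -/
def IsUSO (φ : Finset ℕ → Finset ℕ) (A B : Finset ℕ) : Prop :=
  A ⊆ B ∧ ∀ A' B' : Finset ℕ, A ⊆ A' → A' ⊆ B' → B' ⊆ B → HasUniqueSink φ A' B'

/-- `φ` is a PUSO of the face `[A,B]`: `[A,B]` does not have exactly one sink
under `φ`, but every proper face contained in `[A,B]` has exactly one sink. -/
def IsPUSO (φ : Finset ℕ → Finset ℕ) (A B : Finset ℕ) : Prop :=
  A ⊆ B ∧ ¬ HasUniqueSink φ A B ∧
    ∀ A' B' : Finset ℕ, A ⊆ A' → A' ⊆ B' → B' ⊆ B → ¬(A' = A ∧ B' = B) →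
      HasUniqueSink φ A' B'

section

variable {φ : Finset ℕ → Finset ℕ} {A B A' B' U V : Finset ℕ} {i : ℕ}

lemma isSink_iff : IsSink φ A B V ↔ A ⊆ V ∧ V ⊆ B ∧ ∀ j ∈ B \ A, j ∉ φ V := by
  rw [IsSink, ← disjoint_iff_inter_eq_empty, disjoint_right]

lemma IsSink.restrict (h : IsSink φ A B V) (hA : A ⊆ A') (hB : B' ⊆ B) (hAV : A' ⊆ V)
    (hVB : V ⊆ B') : IsSink φ A' B' V :=
  ⟨hAV, hVB, subset_empty.1 <|
    (inter_subset_inter_left (sdiff_subset_sdiff hB hA)).trans h.2.2.subset⟩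

lemma hasUniqueSink_self (φ : Finset ℕ → Finset ℕ) (A : Finset ℕ) : HasUniqueSink φ A A :=
  ⟨A, ⟨subset_rfl, subset_rfl, by simp⟩, fun _ hV => hV.2.1.antisymm hV.1⟩

lemma isSink_iff_isSink_facet (hi : i ∈ B \ A) :
    IsSink φ A B V ↔
      (IsSink φ A (B.erase i) V ∨ IsSink φ (insert i A) B V) ∧ i ∉ φ V := by
  simp only [isSink_iff]
  grind

lemma existsUnique_eq_or_eq_and_iff_xor {α : Type*} {a b : α} (hab : a ≠ b) (p : α → Prop) :
    (∃! x, (x = a ∨ x = b) ∧ p x) ↔ Xor (p a) (p b) := by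
  unfold ExistsUnique Xor
  grind

lemma hasUniqueSink_iff_xor {s t : Finset ℕ} (hi : i ∈ B \ A)
    (hs : ∀ V, IsSink φ A (B.erase i) V ↔ V = s) (ht : ∀ V, IsSink φ (insert i A) B V ↔ V = t) :
    HasUniqueSink φ A B ↔ Xor (i ∉ φ s) (i ∉ φ t) := by
  have his : i ∉ s := fun h => notMem_erase i B (((hs s).2 rfl).2.1 h)
  have hit : i ∈ t := ((ht t).2 rfl).1 (mem_insert_self i A)
  have hst : s ≠ t := fun h => his (h ▸ hit)
  simp only [HasUniqueSink, isSink_iff_isSink_facet hi, hs, ht]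
  exact existsUnique_eq_or_eq_and_iff_xor hst (i ∉ φ ·)

/-- The outmap obtained from `φ` by reversing all edges in the directions `R`. -/
def flipCoords (φ : Finset ℕ → Finset ℕ) (R : Finset ℕ) : Finset ℕ → Finset ℕ :=
  fun V => φ V ∆ R

lemma flipCoords_induction {P : (Finset ℕ → Finset ℕ) → Prop}
    (singleton : ∀ φ i, P φ → P (flipCoords φ {i})) (h : P φ) (R : Finset ℕ) :
    P (flipCoords φ R) := by
  induction R using Finset.induction_on with
  | empty =>
    have flip_eq : flipCoords φ ∅ = φ := funext fun V => symmDiff_bot (φ V)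
    exact flip_eq.symm ▸ h
  | insert i R hi ih =>
    have insert_eq : insert i R = R ∆ {i} := by
      rw [insert_eq, union_comm]
      exact (disjoint_singleton_right.2 hi).symmDiff_eq_sup.symm
    have flip_eq : flipCoords φ (insert i R) = flipCoords (flipCoords φ R) {i} :=
      funext fun V => by simp only [flipCoords, insert_eq, symmDiff_assoc]
    exact flip_eq ▸ singleton _ i ih

lemma isSink_flipCoords_singleton_iff_of_notMem (hi : i ∉ B \ A) :
    IsSink (flipCoords φ {i}) A B V ↔ IsSink φ A B V := by
  simp only [isSink_iff, flipCoords, mem_symmDiff, mem_singleton]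
  grind

lemma isSink_flipCoords_outmap_iff :
    IsSink (flipCoords φ (φ U)) A B V ↔ A ⊆ V ∧ V ⊆ B ∧ (φ U ∆ φ V) ∩ (B \ A) = ∅ := by
  rw [IsSink, flipCoords, symmDiff_comm]

lemma isSink_flipCoords_self (hA : A ⊆ U) (hB : U ⊆ B) :
    IsSink (flipCoords φ (φ U)) A B U :=
  isSink_flipCoords_outmap_iff.2 ⟨hA, hB, by simp⟩

lemma hasUniqueSink_flipCoords_singleton_iff
    (hfacets : i ∈ B \ A → HasUniqueSink φ A (B.erase i) ∧ HasUniqueSink φ (insert i A) B) :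
    HasUniqueSink (flipCoords φ {i}) A B ↔ HasUniqueSink φ A B := by
  by_cases hi : i ∈ B \ A
  · obtain ⟨⟨s, hs, hs_unique⟩, ⟨t, ht, ht_unique⟩⟩ := hfacets hi
    have hs' V : IsSink φ A (B.erase i) V ↔ V = s := ⟨hs_unique V, fun h => h ▸ hs⟩
    have ht' V : IsSink φ (insert i A) B V ↔ V = t := ⟨ht_unique V, fun h => h ▸ ht⟩
    have mem_flip (V : Finset ℕ) : i ∈ flipCoords φ {i} V ↔ i ∉ φ V := by
      simp [flipCoords, mem_symmDiff]
    rw [hasUniqueSink_iff_xor hi hs' ht',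
      hasUniqueSink_iff_xor hi
        (fun V => (isSink_flipCoords_singleton_iff_of_notMem (by simp)).trans (hs' V))
        (fun V => (isSink_flipCoords_singleton_iff_of_notMem (by simp)).trans (ht' V)),
      mem_flip, mem_flip, xor_not_not]
  · simp only [HasUniqueSink, isSink_flipCoords_singleton_iff_of_notMem hi]

lemma IsUSO.flip_singleton (h : IsUSO φ A B) (i : ℕ) : IsUSO (flipCoords φ {i}) A B := by
  refine ⟨h.1, fun A' B' hA hAB hB => ?_⟩
  refine (hasUniqueSink_flipCoords_singleton_iff fun hi => ?_).2 (h.2 A' B' hA hAB hB)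
  rw [mem_sdiff] at hi
  exact ⟨h.2 _ _ hA (subset_erase.2 ⟨hAB, hi.2⟩) ((erase_subset i B').trans hB),
    h.2 _ _ (hA.trans (subset_insert i A')) (insert_subset hi.1 hAB) hB⟩

lemma IsUSO.flip (h : IsUSO φ A B) (R : Finset ℕ) : IsUSO (flipCoords φ R) A B :=
  flipCoords_induction (P := (IsUSO · A B)) (fun _ i h' => h'.flip_singleton i) h R

lemma IsUSO.outmap_symmDiff_inter_ne_empty (h : IsUSO φ A B) (hAU : A ⊆ U) (hUB : U ⊆ B)
    (hAV : A ⊆ V) (hVB : V ⊆ B) (hne : U ≠ V) : (φ U ∆ φ V) ∩ (U ∆ V) ≠ ∅ := by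
  intro hempty
  have hunique : HasUniqueSink (flipCoords φ (φ U)) (U ∩ V) (U ∪ V) :=
    (h.flip (φ U)).2 _ _ (subset_inter hAU hAV)
      inter_subset_union (union_subset hUB hVB)
  refine hne (hunique.unique (isSink_flipCoords_self inter_subset_left subset_union_left) ?_)
  refine isSink_flipCoords_outmap_iff.2 ⟨inter_subset_right, subset_union_right, ?_⟩
  exact symmDiff_eq_sup_sdiff_inf U V ▸ hempty

lemma IsPUSO.isUSO_of_ne (h : IsPUSO φ A B) (hA : A ⊆ A') (hAB : A' ⊆ B') (hB : B' ⊆ B)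
    (hne : ¬(A' = A ∧ B' = B)) : IsUSO φ A' B' := by
  refine ⟨hAB, fun A'' B'' hA' hAB' hB' =>
    h.2.2 _ _ (hA.trans hA') hAB' (hB'.trans hB) fun heq => hne ⟨?_, ?_⟩⟩
  · exact (hA'.trans heq.1.subset).antisymm hA
  · exact hB.antisymm (heq.2.superset.trans hB')

lemma IsPUSO.carrier_nonempty (h : IsPUSO φ A B) : (B \ A).Nonempty := by
  refine sdiff_nonempty.2 fun hBA => h.2.1 ?_
  rw [h.1.antisymm hBA]
  exact hasUniqueSink_self φ B

lemma IsPUSO.flip_singleton (h : IsPUSO φ A B) (i : ℕ) : IsPUSO (flipCoords φ {i}) A B := by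
  have hfacets (hi : i ∈ B \ A) :
      HasUniqueSink φ A (B.erase i) ∧ HasUniqueSink φ (insert i A) B := by
    rw [mem_sdiff] at hi
    exact ⟨h.2.2 _ _ subset_rfl (subset_erase.2 ⟨h.1, hi.2⟩) (erase_subset i B)
        fun heq => notMem_erase i B (heq.2.symm ▸ hi.1),
      h.2.2 _ _ (subset_insert i A) (insert_subset hi.1 h.1) subset_rfl
        fun heq => hi.2 (heq.1 ▸ mem_insert_self i A)⟩
  exact ⟨h.1, mt (hasUniqueSink_flipCoords_singleton_iff hfacets).1 h.2.1,
    fun A' B' hA hAB hB hne =>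
      ((h.isUSO_of_ne hA hAB hB hne).flip {i}).2 A' B' subset_rfl hAB subset_rfl⟩

lemma IsPUSO.flip (h : IsPUSO φ A B) (R : Finset ℕ) : IsPUSO (flipCoords φ R) A B :=
  flipCoords_induction (P := (IsPUSO · A B)) (fun _ i h' => h'.flip_singleton i) h R

lemma IsPUSO.symmDiff_eq_of_isSink (h : IsPUSO φ A B) (hU : IsSink φ A B U)
    (hV : IsSink φ A B V) (hne : U ≠ V) : U ∆ V = B \ A := by
  have hA : A ⊆ U ∩ V := subset_inter hU.1 hV.1
  have hB : U ∪ V ⊆ B := union_subset hU.2.1 hV.2.1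
  have hspan : U ∩ V = A ∧ U ∪ V = B := by
    by_contra hproper
    exact hne <| (h.2.2 _ _ hA inter_subset_union hB hproper).unique
      (hU.restrict hA hB inter_subset_left subset_union_left)
      (hV.restrict hA hB inter_subset_right subset_union_right)
  rw [← hspan.1, ← hspan.2]
  exact symmDiff_eq_sup_sdiff_inf U V

lemma IsPUSO.outmap_symmDiff_inter_eq_empty (h : IsPUSO φ A B) (hAU : A ⊆ U) (hUB : U ⊆ B)
    (hUV : U ∆ V = B \ A) : (φ U ∆ φ V) ∩ (U ∆ V) = ∅ := by
  have hflip := h.flip (φ U)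
  have hU : IsSink (flipCoords φ (φ U)) A B U := isSink_flipCoords_self hAU hUB
  obtain ⟨W, hW, hWU⟩ : ∃ W, IsSink (flipCoords φ (φ U)) A B W ∧ W ≠ U := by
    by_contra! hunique
    exact hflip.2.1 ⟨U, hU, hunique⟩
  have hWV : W = V := symmDiff_right_injective U <|
    (hflip.symmDiff_eq_of_isSink hU hW hWU.symm).trans hUV.symm
  rw [hUV, ← hWV]
  exact (isSink_flipCoords_outmap_iff.1 hW).2.2

lemma card_carrier_lt_of_ne (hA : A ⊆ A') (hAB : A' ⊆ B') (hB : B' ⊆ B)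
    (hne : ¬(A' = A ∧ B' = B)) : #(B' \ A') < #(B \ A) := by
  refine card_lt_card ((sdiff_subset_sdiff hB hA).ssubset_of_ne fun heq => hne ?_)
  simp only [Finset.ext_iff, mem_sdiff] at heq ⊢
  grind

lemma isUSO_of_forall_not_isPUSO (hAB : A ⊆ B)
    (h : ∀ A' B', A ⊆ A' → B' ⊆ B → ¬ IsPUSO φ A' B') : IsUSO φ A B := by
  induction hdim : #(B \ A) using Nat.strong_induction_on generalizing A B with
  | _ d ih =>
    subst hdim
    have hproper : ∀ A' B', A ⊆ A' → A' ⊆ B' → B' ⊆ B → ¬(A' = A ∧ B' = B) →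
        HasUniqueSink φ A' B' := fun A' B' hA hAB' hB hne =>
      (ih _ (card_carrier_lt_of_ne hA hAB' hB hne) hAB'
        (fun A'' B'' hA' hB' => h A'' B'' (hA.trans hA') (hB'.trans hB)) rfl).2
          A' B' subset_rfl hAB' subset_rfl
    have hself : HasUniqueSink φ A B :=
      by_contra fun hnot => h A B subset_rfl subset_rfl ⟨hAB, hnot, hproper⟩
    refine ⟨hAB, fun A' B' hA hAB' hB => ?_⟩
    by_cases heq : A' = A ∧ B' = B
    · rwa [heq.1, heq.2]
    · exact hproper A' B' hA hAB' hB heq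

end

theorem uso_recognition_general {S T : Finset ℕ} (hST : S ⊆ T) (φ : Finset ℕ → Finset ℕ) :
    IsUSO φ S T ↔
      ∀ A B : Finset ℕ, S ⊆ A → A ⊆ B → B ⊆ T → (B \ A).Nonempty →
        ∃ U V : Finset ℕ, A ⊆ U ∧ U ⊆ B ∧ A ⊆ V ∧ V ⊆ B ∧ U ∆ V = B \ A ∧
          (φ U ∆ φ V) ∩ (U ∆ V) ≠ ∅ := by
  constructor
  · intro h A B hA hAB hB hne
    have hAneB : A ≠ B := fun heq => sdiff_nonempty.1 hne heq.superset
    exact ⟨A, B, subset_rfl, hAB, hAB, subset_rfl, symmDiff_of_le hAB,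
      h.outmap_symmDiff_inter_ne_empty hA (hAB.trans hB) (hA.trans hAB) hB hAneB⟩
  · intro h
    refine isUSO_of_forall_not_isPUSO hST fun A B hA hB hPUSO => ?_
    obtain ⟨U, V, hAU, hUB, -, -, hUV, hdiffer⟩ := h A B hA hPUSO.1 hB hPUSO.carrier_nonempty
    exact hdiffer (hPUSO.outmap_symmDiff_inter_eq_empty hAU hUB hUV)

/-- Correctness of the `O(3^n)`-pair-evaluation USO recognition algorithm:
`φ` is a USO of the full face of the standard `n`-cube iff in every face of
dimension at least 1 some antipodal pair evaluation succeeds. -/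
theorem uso_recognition (n : ℕ) (φ : Finset ℕ → Finset ℕ) :
    IsUSO φ ∅ (Finset.Icc 1 n) ↔
      ∀ A B : Finset ℕ, A ⊆ B → B ⊆ Finset.Icc 1 n → (B \ A).Nonempty →
        ∃ U V : Finset ℕ, A ⊆ U ∧ U ⊆ B ∧ A ⊆ V ∧ V ⊆ B ∧ U ∆ V = B \ A ∧
          (φ U ∆ φ V) ∩ (U ∆ V) ≠ ∅ := by
  simpa only [empty_subset, forall_const] using
    uso_recognition_general (empty_subset (Finset.Icc 1 n)) φ
end

section
/- Let φ be an outmap that is an odd USO of the full face [∅,{1,…,n}] of the standard n-cube, and let F = [A,B] be any face of the standard n-cube. Then (i) φ is an odd USO of F, and (ii) if F has dimension 2, then the induced orientation on F is a bow: the unique sink S of F under φ (the vertex with φ(S) ∩ (B \ A) = ∅) and the unique source T of F (the vertex with B \ A ⊆ φ(T)) satisfy |S ∆ T| = 1. -/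
/-!
Both defining conditions of an odd USO quantify over subfaces and pairs of vertices, so they pass
to every face. In a face with nonempty carrier `C`, the outmaps of the sink `S` and the source `T`
differ on all of `C`, which contains `S ∆ T`; hence `|S ∆ T|` is odd. In dimension 2 it is also at
most 2, so it is 1.
-/

open Finset
open scoped symmDiff

/-- `φ` is an odd USO of the face `[A,B]`: it is a USO of `[A,B]` and for all
distinct vertices `U, V` of the face, `U ∆ V ⊆ φ U ∆ φ V` implies that
`|U ∆ V|` is odd. -/
def IsOddUSO (φ : Finset ℕ → Finset ℕ) (A B : Finset ℕ) : Prop :=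
  IsUSO φ A B ∧
    ∀ U V : Finset ℕ, A ⊆ U → U ⊆ B → A ⊆ V → V ⊆ B → U ≠ V →
      U ∆ V ⊆ φ U ∆ φ V → Odd (U ∆ V).card

section SymmDiff

variable {α : Type*} [GeneralizedBooleanAlgebra α] {a b c x y : α}

theorem symmDiff_le_sdiff (hax : a ≤ x) (hxb : x ≤ b) (hay : a ≤ y) (hyb : y ≤ b) :
    x ∆ y ≤ b \ a :=
  sup_le (sdiff_le_sdiff hxb hay) (sdiff_le_sdiff hyb hax)

theorem le_symmDiff_of_disjoint_of_le (hac : Disjoint a c) (hcb : c ≤ b) : c ≤ a ∆ b :=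
  (le_sdiff.2 ⟨hcb, hac.symm⟩).trans le_sup_right

end SymmDiff

theorem card_symmDiff_eq_one_of_odd {α : Type*} [DecidableEq α] {A B S T : Finset α}
    (hAS : A ⊆ S) (hSB : S ⊆ B) (hAT : A ⊆ T) (hTB : T ⊆ B) (hdim : (B \ A).card ≤ 2)
    (hodd : Odd (S ∆ T).card) : (S ∆ T).card = 1 := by
  have hle : (S ∆ T).card ≤ 2 :=
    (card_le_card (symmDiff_le_sdiff hAS hSB hAT hTB)).trans hdim
  obtain ⟨k, hk⟩ := hodd
  omega

/-- `V` is a source of the face `[A,B]` under the outmap `φ`: the counterpart of `IsSink` in which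
every coordinate of the carrier `B \ A` is outgoing. -/
def IsSource (φ : Finset ℕ → Finset ℕ) (A B V : Finset ℕ) : Prop :=
  A ⊆ V ∧ V ⊆ B ∧ B \ A ⊆ φ V

section Faces

variable {φ : Finset ℕ → Finset ℕ} {A B A₀ B₀ S T : Finset ℕ}

theorem IsSink.sdiff_subset_symmDiff (hS : IsSink φ A B S) (hT : IsSource φ A B T) :
    B \ A ⊆ φ S ∆ φ T :=
  le_symmDiff_of_disjoint_of_le (disjoint_iff_inter_eq_empty.2 hS.2.2) hT.2.2

theorem IsSink.ne_of_isSource (hS : IsSink φ A B S) (hT : IsSource φ A B T)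
    (hAB : (B \ A).Nonempty) : S ≠ T := by
  rintro rfl
  have hsub : B \ A ⊆ φ S ∆ φ S := hS.sdiff_subset_symmDiff hT
  rw [symmDiff_self] at hsub
  exact hAB.ne_empty (subset_empty.1 hsub)

theorem IsUSO.mono (hφ : IsUSO φ A₀ B₀) (hA : A₀ ⊆ A) (hAB : A ⊆ B) (hB : B ⊆ B₀) :
    IsUSO φ A B :=
  ⟨hAB, fun A' B' hA' hAB' hB' => hφ.2 A' B' (hA.trans hA') hAB' (hB'.trans hB)⟩

theorem IsOddUSO.mono (hφ : IsOddUSO φ A₀ B₀) (hA : A₀ ⊆ A) (hAB : A ⊆ B) (hB : B ⊆ B₀) :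
    IsOddUSO φ A B :=
  ⟨hφ.1.mono hA hAB hB, fun U V hAU hUB hAV hVB =>
    hφ.2 U V (hA.trans hAU) (hUB.trans hB) (hA.trans hAV) (hVB.trans hB)⟩

theorem IsOddUSO.odd_card_symmDiff (hφ : IsOddUSO φ A B) (hAB : (B \ A).Nonempty)
    (hS : IsSink φ A B S) (hT : IsSource φ A B T) : Odd (S ∆ T).card :=
  hφ.2 S T hS.1 hS.2.1 hT.1 hT.2.1 (hS.ne_of_isSource hT hAB)
    ((symmDiff_le_sdiff hS.1 hS.2.1 hT.1 hT.2.1).trans (hS.sdiff_subset_symmDiff hT))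

theorem odd_uso_faces_general (hφ : IsOddUSO φ A₀ B₀) (hA : A₀ ⊆ A) (hAB : A ⊆ B)
    (hB : B ⊆ B₀) :
    IsOddUSO φ A B ∧
      ((B \ A).Nonempty → ∀ S T : Finset ℕ, IsSink φ A B S → IsSource φ A B T →
        Odd (S ∆ T).card) :=
  have hface : IsOddUSO φ A B := hφ.mono hA hAB hB
  ⟨hface, fun hne _ _ => hface.odd_card_symmDiff hne⟩

end Faces

/-- Faces of odd USOs are odd USOs, and every 2-face of an odd USO is a bow:
its sink and its source are at Hamming distance 1. -/
theorem odd_uso_faces (n : ℕ) (φ : Finset ℕ → Finset ℕ)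
    (hφ : IsOddUSO φ ∅ (Finset.Icc 1 n))
    (A B : Finset ℕ) (hAB : A ⊆ B) (hB : B ⊆ Finset.Icc 1 n) :
    IsOddUSO φ A B ∧
      ((B \ A).card = 2 →
        ∀ S T : Finset ℕ, A ⊆ S → S ⊆ B → A ⊆ T → T ⊆ B →
          φ S ∩ (B \ A) = ∅ → B \ A ⊆ φ T → (S ∆ T).card = 1) := by
  obtain ⟨hface, hodd⟩ := odd_uso_faces_general hφ (empty_subset A) hAB hB
  refine ⟨hface, fun hdim S T hAS hSB hAT hTB hφS hφT => ?_⟩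
  exact card_symmDiff_eq_one_of_odd hAS hSB hAT hTB hdim.le
    (hodd (card_pos.1 (hdim ▸ two_pos)) S T ⟨hAS, hSB, hφS⟩ ⟨hAT, hTB, hφT⟩)
end
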